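/- arXiv:2603.20356 — 4 statements merged into one kernel-verified Lean document; each statement's English description precedes it below -/
import Mathlib

section
/- Let V be a finite type with a directed edge relation E : V → V → Prop and entry node v0 : V; let Σ be a type of event symbols, σ : V → Σ an event labeling, Q a finite type of automaton states, q0 : Q an initial state, δ : Q → Σ → Q a transition function, and F_viol ⊆ Q a set of violation states. Define the product relation P on V × Q by P (v, q) (u, q') ↔ E v u ∧ q' = δ q (σ v). If no product state (v, q) with q ∈ F_viol is reachable from (v0, q0) under the reflexive-transitive closure of P, then for every directed path v0 = u_0, u_1, …, u_n in G (with E u_i u_{i+1} for all i), the state List.foldl δ q0 [σ(u_0), σ(u_1), …, σ(u_{n-1})] does not lie in F_viol. -/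
/-- **Static Temporal Soundness.** With the product relation
`P (v, q) (u, q') ↔ E v u ∧ q' = δ q (σ v)`, if no product state `(v, q)` with
`q ∈ F_viol` is reachable from `(v0, q0)`, then for every directed path
`v0 = u_0, …, u_n` the folded DFA state over the word `[σ u_0, …, σ u_{n-1}]`
is not a violation state. -/
theorem static_temporal_soundness
    {V : Type*} [Fintype V] {Ev : Type*} {Q : Type*} [Fintype Q]
    (E : V → V → Prop) (v0 : V) (σ : V → Ev)
    (q0 : Q) (δ : Q → Ev → Q) (Fviol : Set Q)
    (hsafe : ∀ (v : V) (q : Q),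
      Relation.ReflTransGen
        (fun p p' : V × Q => E p.1 p'.1 ∧ p'.2 = δ p.2 (σ p.1)) (v0, q0) (v, q) →
      q ∉ Fviol) :
    ∀ (n : ℕ) (u : Fin (n + 1) → V),
      u 0 = v0 →
      (∀ i : Fin n, E (u i.castSucc) (u i.succ)) →
      List.foldl δ q0 (List.ofFn (fun i : Fin n => σ (u i.castSucc))) ∉ Fviol := by
  intro n
  induction n generalizing v0 q0 with
  | zero =>
    intro u hu hE
    simpa using hsafe v0 q0 Relation.ReflTransGen.refl
  | succ n ih =>
    intro u hu hE
    rw [List.ofFn_succ, List.foldl_cons]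
    have hstep : E v0 (u 1) := by
      have h := hE 0
      rw [Fin.castSucc_zero, hu] at h
      exact h
    have h0 : δ q0 (σ (u (Fin.castSucc 0))) = δ q0 (σ v0) := by
      rw [Fin.castSucc_zero, hu]
    rw [h0]
    exact ih (u 1) (δ q0 (σ v0))
      (fun v q h => hsafe v q (Relation.ReflTransGen.head ⟨hstep, rfl⟩ h))
      (fun i => u i.succ) rfl (fun i => hE i.succ)
end

section
/- Let Σ be a type of events and a, b : Σ → Prop decidable predicates. Define the three-state implication-future DFA on states {s0, s1, s2} by: δ(s0, x) = s1 if a(x) ∧ ¬b(x) and s0 otherwise; δ(s1, x) = s0 if b(x), s2 if a(x) ∧ ¬b(x), and s1 otherwise; δ(s2, x) = s2 for all x. Then for every finite event list π, if List.foldl δ s0 π ≠ s2, then for all indices i < j with a(π_i) ∧ ¬b(π_i) and a(π_j) ∧ ¬b(π_j), there exists an index k with i < k < j and b(π_k). That is, if the monitor reports no violation, every occurrence of a is followed by an occurrence of b before a recurs. -/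
/-- States of the three-state implication-future DFA: idle `s0`, waiting `s1`,
absorbing violation `s2`. -/
inductive ImpFutState where
  | s0 : ImpFutState
  | s1 : ImpFutState
  | s2 : ImpFutState
  deriving DecidableEq

/-- Transition function of the implication-future DFA for `a -> F b`. -/
def impFutDelta {Ev : Type*} (a b : Ev → Prop) [DecidablePred a] [DecidablePred b] :
    ImpFutState → Ev → ImpFutState
  | ImpFutState.s0, x => if a x ∧ ¬ b x then ImpFutState.s1 else ImpFutState.s0
  | ImpFutState.s1, x =>
      if b x then ImpFutState.s0
      else if a x ∧ ¬ b x then ImpFutState.s2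
      else ImpFutState.s1
  | ImpFutState.s2, _ => ImpFutState.s2

theorem impFut_foldl_s2 {Ev : Type*} (a b : Ev → Prop) [DecidablePred a] [DecidablePred b]
    (π : List Ev) : List.foldl (impFutDelta a b) ImpFutState.s2 π = ImpFutState.s2 := by
  induction π with
  | nil => rfl
  | cons x t ih => simpa [impFutDelta] using ih

theorem impFut_from_s1 {Ev : Type*} (a b : Ev → Prop) [DecidablePred a] [DecidablePred b]
    (π : List Ev)
    (hok : List.foldl (impFutDelta a b) ImpFutState.s1 π ≠ ImpFutState.s2) :
    ∀ (j : ℕ) (hj : j < π.length), (a (π[j]'hj) ∧ ¬ b (π[j]'hj)) →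
      ∃ (k : ℕ) (hk : k < π.length), k < j ∧ b (π[k]'hk) := by
  induction π with
  | nil => intro j hj; simp at hj
  | cons x t ih =>
    intro j hj hab
    rw [List.foldl_cons] at hok
    by_cases hb : b x
    · cases j with
      | zero => exact absurd hb hab.2
      | succ j => exact ⟨0, by simp, by omega, hb⟩
    · by_cases ha : a x
      · exact absurd (by simpa [impFutDelta, ha, hb] using impFut_foldl_s2 a b t) hok
      · cases j with
        | zero => exact absurd hab.1 ha
        | succ j =>
          have hok' : List.foldl (impFutDelta a b) ImpFutState.s1 t ≠ ImpFutState.s2 := by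
            simpa [impFutDelta, ha, hb] using hok
          obtain ⟨k, hk, hkj, hbk⟩ := ih hok' j (by simpa using hj) (by simpa using hab)
          exact ⟨k + 1, by simpa using hk, by omega, by simpa using hbk⟩

theorem impFut_from_any {Ev : Type*} (a b : Ev → Prop) [DecidablePred a] [DecidablePred b]
    (π : List Ev) : ∀ (s : ImpFutState),
    List.foldl (impFutDelta a b) s π ≠ ImpFutState.s2 →
    ∀ (i j : ℕ) (hi : i < π.length) (hj : j < π.length), i < j →
      (a (π[i]'hi) ∧ ¬ b (π[i]'hi)) →
      (a (π[j]'hj) ∧ ¬ b (π[j]'hj)) →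
      ∃ (k : ℕ) (hk : k < π.length), i < k ∧ k < j ∧ b (π[k]'hk) := by
  induction π with
  | nil => intro s _ i j hi; simp at hi
  | cons x t ih =>
    intro s hok i j hi hj hij hai haj
    rw [List.foldl_cons] at hok
    obtain ⟨j, rfl⟩ : ∃ j', j = j' + 1 := ⟨j - 1, by omega⟩
    cases i with
    | zero =>
      have ha : a x := hai.1
      have hb : ¬ b x := hai.2
      have hok' : List.foldl (impFutDelta a b) ImpFutState.s1 t ≠ ImpFutState.s2 := by
        cases s with
        | s0 => simpa [impFutDelta, ha, hb] using hok
        | s1 => exact absurd (by simpa [impFutDelta, ha, hb] using impFut_foldl_s2 a b t) hok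
        | s2 => exact absurd (impFut_foldl_s2 a b t) hok
      obtain ⟨k, hk, hkj, hbk⟩ :=
        impFut_from_s1 a b t hok' j (by simpa using hj) (by simpa using haj)
      exact ⟨k + 1, by simpa using hk, by omega, by omega, by simpa using hbk⟩
    | succ i =>
      obtain ⟨k, hk, hik, hkj, hbk⟩ := ih _ hok i j (by simpa using hi) (by simpa using hj)
        (by omega) (by simpa using hai) (by simpa using haj)
      exact ⟨k + 1, by simpa using hk, by omega, by omega, by simpa using hbk⟩

/-- **Implication-Future Monitor Soundness (`a → F b`).** If the fold of the DFA
from `s0` over `π` does not end in `s2`, then between any two indices `i < j`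
at which `a ∧ ¬b` holds there is an intermediate index `k` with `b (π k)`. -/
theorem implication_future_monitor_soundness
    {Ev : Type*} (a b : Ev → Prop) [DecidablePred a] [DecidablePred b]
    (π : List Ev)
    (hok : List.foldl (impFutDelta a b) ImpFutState.s0 π ≠ ImpFutState.s2) :
    ∀ (i j : ℕ) (hi : i < π.length) (hj : j < π.length), i < j →
      (a (π[i]'hi) ∧ ¬ b (π[i]'hi)) →
      (a (π[j]'hj) ∧ ¬ b (π[j]'hj)) →
      ∃ (k : ℕ) (hk : k < π.length), i < k ∧ k < j ∧ b (π[k]'hk) := by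
  exact impFut_from_any a b π _ hok
end

section
/- Let Σ be a type of events and a, b : Σ → Prop decidable predicates. Define the three-state until DFA on states {s0, s1, s2} by: δ(s0, x) = s1 if b(x), s0 if a(x) ∧ ¬b(x), and s2 if ¬a(x) ∧ ¬b(x); δ(s1, x) = s1 and δ(s2, x) = s2 for all x. Then for every finite event list π, if List.foldl δ s0 π ≠ s2, then for every index i, if ¬b(π_j) holds for all j ≤ i, then a(π_i). That is, if the monitor reports no violation, a holds at every position up to and including the position strictly before the first occurrence of b (and at every position if b never occurs). -/
/-- States of the three-state until DFA: waiting `s0`, absorbing satisfied `s1`,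
absorbing violation `s2`. -/
inductive UntilState where
  | s0 : UntilState
  | s1 : UntilState
  | s2 : UntilState
  deriving DecidableEq

/-- Transition function of the until DFA for `a U b`: from `s0`, `b` leads to
`s1`, `a ∧ ¬b` stays at `s0`, and `¬a ∧ ¬b` leads to `s2`; `s1` and `s2` are
absorbing. -/
def untilDelta {Ev : Type*} (a b : Ev → Prop) [DecidablePred a] [DecidablePred b] :
    UntilState → Ev → UntilState
  | UntilState.s0, x =>
      if b x then UntilState.s1
      else if a x then UntilState.s0
      else UntilState.s2
  | UntilState.s1, _ => UntilState.s1
  | UntilState.s2, _ => UntilState.s2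

theorem untilDelta_foldl_s2 {Ev : Type*} (a b : Ev → Prop) [DecidablePred a] [DecidablePred b]
    (l : List Ev) : List.foldl (untilDelta a b) UntilState.s2 l = UntilState.s2 := by
  induction l with
  | nil => rfl
  | cons x l ih => exact ih

/-- **Until Monitor Soundness (`a U b`).** If the fold of the until DFA from `s0`
over `π` does not end in `s2`, then for every index `i`: if `b` fails at all
positions `j ≤ i`, then `a` holds at position `i`. -/
theorem until_monitor_soundness
    {Ev : Type*} (a b : Ev → Prop) [DecidablePred a] [DecidablePred b]
    (π : List Ev)
    (hok : List.foldl (untilDelta a b) UntilState.s0 π ≠ UntilState.s2) :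
    ∀ (i : ℕ) (hi : i < π.length),
      (∀ (j : ℕ) (hj : j ≤ i), ¬ b (π[j]'(Nat.lt_of_le_of_lt hj hi))) →
      a (π[i]'hi) := by
  induction π with
  | nil =>
    intro i hi
    exact absurd hi (Nat.not_lt_zero i)
  | cons x l ih =>
    intro i hi hb
    have hbx : ¬ b x := hb 0 (Nat.zero_le i)
    have hax : a x := by
      by_contra hax
      apply hok
      rw [List.foldl_cons]
      have h : untilDelta a b UntilState.s0 x = UntilState.s2 := by
        simp [untilDelta, hbx, hax]
      rw [h]
      exact untilDelta_foldl_s2 a b l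
    cases i with
    | zero => exact hax
    | succ i =>
      have h : untilDelta a b UntilState.s0 x = UntilState.s0 := by
        simp [untilDelta, hbx, hax]
      rw [List.foldl_cons, h] at hok
      exact ih hok i (Nat.lt_of_succ_lt_succ hi)
        (fun j hj => hb (j + 1) (Nat.succ_le_succ hj))
end

section
/- Let V be a finite type with a directed edge relation E : V → V → Prop and entry node v0 : V; let Σ be a type of event symbols, σ : V → Σ an event labeling, Q a finite type, q0 : Q, and δ : Q → Σ → Q. Define the product relation P on V × Q by P (v, q) (u, q') ↔ E v u ∧ q' = δ q (σ v). Then for every directed path v0 = u_0, u_1, …, u_n in G and every index i ≤ n, the product state (u_i, List.foldl δ q0 [σ(u_0), …, σ(u_{i-1})]) is reachable from (v0, q0) under the reflexive-transitive closure of P. -/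
/-- **Product Over-Approximation of Graph Paths.** With the product relation
`P (v, q) (u, q') ↔ E v u ∧ q' = δ q (σ v)`, every directed path
`v0 = u_0, …, u_n` induces, at each index `i ≤ n`, the reachable product state
`(u_i, foldl δ q0 [σ u_0, …, σ u_{i-1}])` from `(v0, q0)`. -/
theorem product_overapproximates_paths
    {V : Type*} [Fintype V] {Ev : Type*} {Q : Type*} [Fintype Q]
    (E : V → V → Prop) (v0 : V) (σ : V → Ev) (q0 : Q) (δ : Q → Ev → Q) :
    ∀ (n : ℕ) (u : Fin (n + 1) → V),
      u 0 = v0 →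
      (∀ i : Fin n, E (u i.castSucc) (u i.succ)) →
      ∀ i : Fin (n + 1),
        Relation.ReflTransGen
          (fun p p' : V × Q => E p.1 p'.1 ∧ p'.2 = δ p.2 (σ p.1))
          (v0, q0)
          (u i,
            List.foldl δ q0
              (List.ofFn (fun j : Fin i.val =>
                σ (u ⟨j.val, Nat.lt_trans j.isLt i.isLt⟩)))) := by
  intro n u h0 hE i
  obtain ⟨k, hk⟩ := i
  induction k with
  | zero =>
    have h : u ⟨0, hk⟩ = v0 := h0
    simp only [h, List.ofFn_zero, List.foldl_nil]
    exact Relation.ReflTransGen.refl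
  | succ k ih =>
    have hk' : k < n := Nat.lt_of_succ_lt_succ hk
    refine Relation.ReflTransGen.tail (ih (Nat.lt_succ_of_lt hk')) ⟨hE ⟨k, hk'⟩, ?_⟩
    simp only [List.ofFn_succ_last, List.foldl_append, List.foldl_cons, List.foldl_nil,
      Fin.val_castSucc, Fin.val_last]
end
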